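/- Let h be a framing datum with image A = h(ℝ × [0,1]) and associated path X, and assume the topological frontier of A in ℂ is contained in h(ℝ × {0}) ∪ h(ℝ × {1}). Let f : ℝ × ℝ → ℂ be X-holomorphic on ℝ × [0,1] with f(θ + 2π, t) = f(θ, t), and let g : A → ℂ be the unique continuous map with f = g ∘ h on ℝ × [0,1]. Assume further that for every z in the interior of A one has (1/(2πi)) ∫₀^{2π} (∂h/∂θ)(θ,1)/(h(θ,1) − z) dθ = 1 and (1/(2πi)) ∫₀^{2π} (∂h/∂θ)(θ,0)/(h(θ,0) − z) dθ = 0. Then for every z in the interior of A: g(z) = (1/(2πi)) ( ∫₀^{2π} f(θ,1)·(∂h/∂θ)(θ,1)/(h(θ,1) − z) dθ − ∫₀^{2π} f(θ,0)·(∂h/∂θ)(θ,0)/(h(θ,0) − z) dθ ). -/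

import Mathlib

open Set Complex Real

lemma aux_cont_param (p γ : ℝ → ℂ) (hp : Continuous p) (hγ : Continuous γ) (a b : ℝ) (z : ℂ)
    (hz : ∀ θ ∈ uIcc a b, γ θ ≠ z) :
    ContinuousAt (fun w => ∫ θ in a..b, p θ / (γ θ - w)) z := by
  obtain ⟨δ, hδ, hδ'⟩ := (isCompact_uIcc (a := a) (b := b)).exists_forall_le'
    (f := fun θ => ‖γ θ - z‖) (by fun_prop) (a := 0)
    (fun θ hθ => norm_pos_iff.2 (sub_ne_zero.2 (hz θ hθ)))
  apply intervalIntegral.continuousAt_of_dominated_interval (bound := fun θ => ‖p θ‖ / (δ / 2))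
  · refine Filter.Eventually.of_forall fun w => ?_
    exact (hp.measurable.div (hγ.measurable.sub_const w)).aestronglyMeasurable
  · filter_upwards [Metric.ball_mem_nhds z (half_pos hδ)] with w hw
    refine Filter.Eventually.of_forall fun θ hθ => ?_
    have h1 := hδ' θ (uIoc_subset_uIcc hθ)
    have h2 : ‖w - z‖ < δ / 2 := by simpa [dist_eq_norm] using hw
    have h3 : ‖γ θ - z‖ ≤ ‖γ θ - w‖ + ‖w - z‖ := by
      simpa using norm_add_le (γ θ - w) (w - z)
    rw [norm_div]
    apply div_le_div_of_nonneg_left (norm_nonneg _) (half_pos hδ)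
    linarith
  · exact Continuous.intervalIntegrable (by fun_prop) _ _
  · refine Filter.Eventually.of_forall fun θ hθ => ?_
    have := hz θ (uIoc_subset_uIcc hθ)
    exact ContinuousAt.div (by fun_prop) (by fun_prop) (sub_ne_zero.2 this)

lemma aux_inj (γ : ℝ → ℂ) (per : ∀ θ, γ (θ + 2 * π) = γ θ) (inj : InjOn γ (Ico 0 (2 * π)))
    (θ θ0 : ℝ) (h1 : θ0 < θ) (h2 : θ < θ0 + 2 * π) : γ θ ≠ γ θ0 := by
  intro h
  have hp : Function.Periodic γ (2 * π) := per
  have e : ∀ x, γ (toIcoMod Real.two_pi_pos 0 x) = γ x := fun x => by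
    rw [toIcoMod]; exact hp.sub_zsmul_eq _
  have m : ∀ x, toIcoMod Real.two_pi_pos 0 x ∈ Ico 0 (2 * π) := fun x => by
    simpa using toIcoMod_mem_Ico Real.two_pi_pos 0 x
  have := inj (m θ) (m θ0) (by rw [e, e, h])
  rw [toIcoMod, toIcoMod] at this
  set m := toIcoDiv Real.two_pi_pos 0 θ
  set n := toIcoDiv Real.two_pi_pos 0 θ0
  simp only [zsmul_eq_mul] at this
  have h3 : θ - θ0 = ((m - n : ℤ) : ℝ) * (2 * π) := by push_cast; linarith
  have hpi := Real.two_pi_pos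
  have h4 : (0:ℝ) < ((m - n : ℤ) : ℝ) := by
    by_contra hh
    push Not at hh
    nlinarith
  have h5 : ((m - n : ℤ) : ℝ) < 1 := by
    by_contra hh
    push Not at hh
    nlinarith
  have h6 : (0 : ℤ) < m - n := by exact_mod_cast h4
  have h7 : m - n < 1 := by exact_mod_cast h5
  omega

lemma aux_half (γ : ℝ → ℂ) (hγ : ContDiff ℝ 1 γ) (per : ∀ θ, γ (θ + 2 * π) = γ θ)
    (inj : InjOn γ (Ico 0 (2 * π))) (θ0 : ℝ) (a : ℂ) (ha : a ≠ 0) (U : Set ℂ)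
    (hU : U ∈ nhds (γ θ0)) (c : ℂ)
    (hc : ∀ w ∈ U, ∫ θ in (0:ℝ)..(2 * π), deriv γ θ / (γ θ - w) = c)
    (δ : ℝ) (hδ : 0 < δ) (hδπ : δ < π)
    (hre : ∀ θ ∈ Icc (θ0 - δ) (θ0 + δ), θ ≠ θ0 → ((γ θ - γ θ0) / a).re ≠ 0)
    (σ : ℂ) (hσ : σ * σ = -1) (hσim : ∀ v : ℂ, v.re ≠ 0 → (σ * v).im ≠ 0) :
    c = log (σ * ((γ (θ0 + δ) - γ θ0) / a)) - log (σ * ((γ (θ0 - δ) - γ θ0) / a))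
      + ∫ θ in (θ0 + δ)..(θ0 - δ + 2 * π), deriv γ θ / (γ θ - γ θ0) := by
  have hγc : Continuous γ := hγ.continuous
  have hγd : Continuous (deriv γ) := hγ.continuous_deriv le_rfl
  have hder : ∀ θ, HasDerivAt γ (deriv γ θ) θ := fun θ =>
    (hγ.differentiable one_ne_zero θ).hasDerivAt
  set z := γ θ0 with hz
  have hσ0 : σ ≠ 0 := by rintro rfl; simp at hσ
  set W : ℝ → ℂ := fun ε => z + σ * ε * a with hW
  have hW0 : W 0 = z := by simp [hW]
  have hWc : Continuous W := by fun_prop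
  have far_ne : ∀ θ ∈ uIcc (θ0 + δ) (θ0 - δ + 2 * π), γ θ ≠ z := by
    intro θ hθ
    rw [uIcc_of_le (by linarith)] at hθ
    exact aux_inj γ per inj θ θ0 (by linarith [hθ.1]) (by linarith [hθ.2])
  have hfar : ContinuousAt (fun w => ∫ θ in (θ0 + δ)..(θ0 - δ + 2 * π), deriv γ θ / (γ θ - w)) z :=
    aux_cont_param _ _ hγd hγc _ _ _ far_ne
  have slit : ∀ θ ∈ Icc (θ0 - δ) (θ0 + δ), ∀ ε : ℝ, 0 < ε →
      σ * ((γ θ - z) / a) + ε ∈ slitPlane := by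
    intro θ hθ ε hε
    by_cases h : θ = θ0
    · subst h
      left
      simpa [← hz] using hε
    · right
      have := hσim _ (hre θ hθ h)
      simpa using this
  have key : ∀ θ ε : ℝ, γ θ - W ε = (-(σ * a)) * (σ * ((γ θ - z) / a) + ε) := by
    intro θ ε
    have : -(σ * a) * (σ * ((γ θ - z) / a) + ε) = -(σ * σ) * (a * ((γ θ - z) / a)) - σ * ε * a := by
      ring
    rw [this, hσ, mul_div_cancel₀ _ ha]
    simp only [hW]; ring
  have near_ne : ∀ θ ∈ Icc (θ0 - δ) (θ0 + δ), ∀ ε : ℝ, 0 < ε → γ θ - W ε ≠ 0 := by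
    intro θ hθ ε hε
    rw [key]
    exact mul_ne_zero (neg_ne_zero.2 (mul_ne_zero hσ0 ha)) (slitPlane_ne_zero (slit θ hθ ε hε))
  have near_int : ∀ ε : ℝ, 0 < ε → IntervalIntegrable (fun θ => deriv γ θ / (γ θ - W ε))
      MeasureTheory.volume (θ0 - δ) (θ0 + δ) := by
    intro ε hε
    apply ContinuousOn.intervalIntegrable
    rw [uIcc_of_le (by linarith)]
    exact ContinuousOn.div (by fun_prop) (by fun_prop) (fun θ hθ => near_ne θ hθ ε hε)
  have near : ∀ ε : ℝ, 0 < ε → ∫ θ in (θ0 - δ)..(θ0 + δ), deriv γ θ / (γ θ - W ε) =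
      log (σ * ((γ (θ0 + δ) - z) / a) + ε) - log (σ * ((γ (θ0 - δ) - z) / a) + ε) := by
    intro ε hε
    refine intervalIntegral.integral_eq_sub_of_hasDerivAt
      (f := fun θ => log (σ * ((γ θ - z) / a) + ε)) ?_ (near_int ε hε)
    intro θ hθ
    rw [uIcc_of_le (by linarith)] at hθ
    have h1 : HasDerivAt (fun θ => σ * ((γ θ - z) / a) + ε) (σ * (deriv γ θ / a)) θ :=
      ((((hder θ).sub_const z).div_const a).const_mul σ).add_const _
    have h2 := h1.clog_real (slit θ hθ ε hε)
    have h3 := slitPlane_ne_zero (slit θ hθ ε hε)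
    suffices hs : deriv γ θ / (γ θ - W ε) =
        σ * (deriv γ θ / a) / (σ * ((γ θ - z) / a) + ε) by rw [hs]; exact h2
    rw [key]
    rw [div_eq_div_iff (mul_ne_zero (neg_ne_zero.2 (mul_ne_zero hσ0 ha)) h3) h3]
    have : σ * (deriv γ θ / a) * (-(σ * a) * (σ * ((γ θ - z) / a) + ↑ε)) =
      -(σ * σ) * (a * (deriv γ θ / a)) * (σ * ((γ θ - z) / a) + ↑ε) := by ring
    rw [this, hσ, mul_div_cancel₀ _ ha]; ring
  have hpi := Real.pi_pos
  have tot : ∀ᶠ ε : ℝ in nhdsWithin (0:ℝ) (Ioi 0),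
      log (σ * ((γ (θ0 + δ) - z) / a) + ε) - log (σ * ((γ (θ0 - δ) - z) / a) + ε)
      + ∫ θ in (θ0 + δ)..(θ0 - δ + 2 * π), deriv γ θ / (γ θ - W ε) = c := by
    have hWt : Filter.Tendsto W (nhdsWithin 0 (Ioi 0)) (nhds z) := by
      have := hWc.tendsto 0
      rw [hW0] at this
      exact this.mono_left nhdsWithin_le_nhds
    have e1 : ∀ᶠ w in nhds z, ∀ θ ∈ uIcc (θ0 + δ) (θ0 - δ + 2 * π), γ θ ≠ w := by
      have hcl : IsClosed (γ '' uIcc (θ0 + δ) (θ0 - δ + 2 * π)) :=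
        (isCompact_uIcc.image hγc).isClosed
      have : z ∈ (γ '' uIcc (θ0 + δ) (θ0 - δ + 2 * π))ᶜ := by
        rintro ⟨θ, hθ, h⟩; exact far_ne θ hθ h
      filter_upwards [hcl.isOpen_compl.mem_nhds this] with w hw θ hθ h
      exact hw ⟨θ, hθ, h⟩
    filter_upwards [hWt hU, hWt.eventually e1, self_mem_nhdsWithin] with ε h1 h2 h3
    have h3 : 0 < ε := h3
    rw [← near ε h3, ← hc _ h1]
    rw [intervalIntegral.integral_add_adjacent_intervals (near_int ε h3)]
    · have hP : Function.Periodic (fun θ => deriv γ θ / (γ θ - W ε)) (2 * π) := by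
        intro θ
        have : deriv γ (θ + 2 * π) = deriv γ θ := by
          rw [← deriv_comp_add_const]
          congr 1
          funext x; exact per x
        simp only [this, per]
      have := hP.intervalIntegral_add_eq (θ0 - δ) 0
      simpa using this
    · apply ContinuousOn.intervalIntegrable
      exact ContinuousOn.div (by fun_prop) (by fun_prop) (fun θ hθ => sub_ne_zero.2 (h2 θ hθ))
  have lim : Filter.Tendsto (fun ε : ℝ =>
      log (σ * ((γ (θ0 + δ) - z) / a) + ε) - log (σ * ((γ (θ0 - δ) - z) / a) + ε)
      + ∫ θ in (θ0 + δ)..(θ0 - δ + 2 * π), deriv γ θ / (γ θ - W ε)) (nhdsWithin (0:ℝ) (Ioi 0))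
      (nhds (log (σ * ((γ (θ0 + δ) - z) / a)) - log (σ * ((γ (θ0 - δ) - z) / a))
      + ∫ θ in (θ0 + δ)..(θ0 - δ + 2 * π), deriv γ θ / (γ θ - z))) := by
    have l : ∀ v : ℂ, v.im ≠ 0 → ContinuousAt (fun ε : ℝ => log (v + ε)) 0 := by
      intro v hv
      refine ContinuousAt.clog (by fun_prop) ?_
      right; simpa using hv
    have l1 := l (σ * ((γ (θ0 + δ) - z) / a))
      (hσim _ (hre _ ⟨by linarith, by linarith⟩ (by linarith)))
    have l2 := l (σ * ((γ (θ0 - δ) - z) / a))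
      (hσim _ (hre _ ⟨by linarith, by linarith⟩ (by linarith)))
    have l3 : ContinuousAt (fun ε => ∫ θ in (θ0 + δ)..(θ0 - δ + 2 * π), deriv γ θ / (γ θ - W ε)) 0 := by
      refine ContinuousAt.comp (f := W) (g := fun w => ∫ θ in (θ0 + δ)..(θ0 - δ + 2 * π), deriv γ θ / (γ θ - w)) ?_ hWc.continuousAt
      rw [hW0]; exact hfar
    have := ((l1.sub l2).add l3).tendsto
    simp only [Pi.add_apply, Pi.sub_apply, ofReal_zero, add_zero, hW0] at this
    exact this.mono_left nhdsWithin_le_nhds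
  exact tendsto_nhds_unique (tendsto_const_nhds.congr' (tot.mono fun _ h => h.symm)) lim

lemma aux_log_pos (v : ℂ) (h : 0 < v.im) : log v - log (-v) = π * I := by
  rw [Complex.log, Complex.log, arg_neg_eq_arg_sub_pi_of_im_pos h, norm_neg]
  push_cast; ring

lemma aux_jump (γ : ℝ → ℂ) (hγ : ContDiff ℝ 1 γ) (per : ∀ θ, γ (θ + 2 * π) = γ θ)
    (inj : InjOn γ (Ico 0 (2 * π))) (θ0 : ℝ) (hd : deriv γ θ0 ≠ 0) (U : Set ℂ)
    (hU : U ∈ nhds (γ θ0)) (c : ℂ)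
    (hc : ∀ w ∈ U, ∫ θ in (0:ℝ)..(2 * π), deriv γ θ / (γ θ - w) = c) : False := by
  set a := deriv γ θ0 with ha
  have hder : HasDerivAt (fun θ => (γ θ - γ θ0) / a) 1 θ0 := by
    have := (((hγ.differentiable one_ne_zero θ0).hasDerivAt).sub_const (γ θ0)).div_const a
    rwa [← ha, div_self hd] at this
  have h1 := (hasDerivAt_iff_isLittleO.1 hder).def (c := 1/2) (by norm_num)
  obtain ⟨r, hr, hr'⟩ := Metric.eventually_nhds_iff.1 h1
  set δ := min (r / 2) (π / 2) with hδdef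
  have hδ : 0 < δ := lt_min (by linarith) (by linarith [Real.pi_pos])
  have hδr : δ < r := lt_of_le_of_lt (min_le_left _ _) (by linarith)
  have hδπ : δ < π := lt_of_le_of_lt (min_le_right _ _) (by linarith [Real.pi_pos])
  have est : ∀ θ ∈ Icc (θ0 - δ) (θ0 + δ),
      |((γ θ - γ θ0) / a).re - (θ - θ0)| ≤ 1 / 2 * |θ - θ0| := by
    intro θ hθ
    have := hr' (y := θ) (by
      rw [Real.dist_eq]
      exact lt_of_le_of_lt (abs_le.2 ⟨by linarith [hθ.1], by linarith [hθ.2]⟩) hδr)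
    refine le_trans ?_ this
    have h2 := abs_re_le_norm ((γ θ - γ θ0) / a - (γ θ0 - γ θ0) / a - (θ - θ0) • (1:ℂ))
    simpa using h2
  have hpos : 0 < ((γ (θ0 + δ) - γ θ0) / a).re := by
    have := est (θ0 + δ) ⟨by linarith, by linarith⟩
    rw [add_sub_cancel_left, abs_of_pos hδ, abs_le] at this
    linarith [this.1]
  have hneg : ((γ (θ0 - δ) - γ θ0) / a).re < 0 := by
    have := est (θ0 - δ) ⟨by linarith, by linarith⟩
    rw [show θ0 - δ - θ0 = -δ by ring, abs_neg, abs_of_pos hδ, abs_le] at this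
    linarith [this.2]
  have hre : ∀ θ ∈ Icc (θ0 - δ) (θ0 + δ), θ ≠ θ0 → ((γ θ - γ θ0) / a).re ≠ 0 := by
    intro θ hθ hne h0
    have := est θ hθ
    rw [h0, zero_sub, abs_neg] at this
    have h3 : 0 < |θ - θ0| := abs_pos.2 (sub_ne_zero.2 hne)
    linarith
  have e1 := aux_half γ hγ per inj θ0 a hd U hU c hc δ hδ hδπ hre I (by simp)
    (fun v hv => by simpa using hv)
  have e2 := aux_half γ hγ per inj θ0 a hd U hU c hc δ hδ hδπ hre (-I) (by simp)
    (fun v hv => by simpa using hv)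
  have l1 := aux_log_pos (I * ((γ (θ0 + δ) - γ θ0) / a)) (by rw [I_mul_im]; exact hpos)
  have l2 := aux_log_pos (-I * ((γ (θ0 - δ) - γ θ0) / a)) (by
    rw [neg_mul, neg_im, I_mul_im]; linarith)
  simp only [neg_mul, neg_neg] at l1 l2 e1 e2
  have : (2 * π * I : ℂ) = 0 := by linear_combination (-1 : ℂ) * l1 - l2 - e1 + e2
  simp [Real.pi_ne_zero] at this


lemma aux_regular
    (h : ℝ × ℝ → ℂ)
    (hsm : ContDiff ℝ (⊤ : ℕ∞) h)
    (hper : ∀ θ t, h (θ + 2 * π, t) = h (θ, t))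
    (hderiv : ∀ θ : ℝ, ∀ t ∈ Icc (0:ℝ) 1, fderiv ℝ h (θ, t) (1, 0) ≠ 0)
    (f : ℝ × ℝ → ℂ)
    (hf_per : ∀ θ t, f (θ + 2 * π, t) = f (θ, t))
    (hf_sm : ContDiff ℝ (⊤ : ℕ∞) f)
    (hf_holo : ∀ θ : ℝ, ∀ t ∈ Icc (0:ℝ) 1,
      fderiv ℝ f (θ, t) (0, 1) * fderiv ℝ h (θ, t) (1, 0) =
        fderiv ℝ f (θ, t) (1, 0) * fderiv ℝ h (θ, t) (0, 1))
    (z c : ℂ)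
    (hfz : ∀ θ : ℝ, ∀ t ∈ Icc (0:ℝ) 1, h (θ, t) = z → f (θ, t) = c)
    (hz0 : ∀ θ, h (θ, 0) ≠ z) (hz1 : ∀ θ, h (θ, 1) ≠ z)
    (hreg : ∀ p : ℝ × ℝ, h p = z → ∃ e : (ℝ × ℝ) ≃L[ℝ] ℂ, (e : (ℝ × ℝ) →L[ℝ] ℂ) = fderiv ℝ h p) :
    ∫ θ in (0:ℝ)..(2 * π), (f (θ, 1) - c) / (h (θ, 1) - z) * fderiv ℝ h (θ, 1) (1, 0) =
    ∫ θ in (0:ℝ)..(2 * π), (f (θ, 0) - c) / (h (θ, 0) - z) * fderiv ℝ h (θ, 0) (1, 0) := by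
  classical
  have hdh : ∀ p, HasFDerivAt h (fderiv ℝ h p) p := fun p =>
    (hsm.differentiable (by simp) p).hasFDerivAt
  have hdf : ∀ p, HasFDerivAt f (fderiv ℝ f p) p := fun p =>
    (hf_sm.differentiable (by simp) p).hasFDerivAt
  have hhc : Continuous h := hsm.continuous
  have hfc : Continuous f := hf_sm.continuous
  have hd2 : ContDiff ℝ (⊤ : ℕ∞) (fderiv ℝ h) := hsm.fderiv_right (by simp)
  have hd2c : Continuous (fderiv ℝ h) := hd2.continuous
  have hd2d : ∀ p, HasFDerivAt (fderiv ℝ h) (fderiv ℝ (fderiv ℝ h) p) p := fun p =>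
    (hd2.differentiable (by simp) p).hasFDerivAt
  have hsymm : ∀ p v w, fderiv ℝ (fderiv ℝ h) p v w = fderiv ℝ (fderiv ℝ h) p w v := fun p =>
    (hsm.contDiffAt (x := p)).isSymmSndFDerivAt (by
      simp only [minSmoothness_of_isRCLikeNormedField]; exact WithTop.coe_le_coe.2 (le_top : (2 : ℕ∞) ≤ ⊤))
  set k : ℝ × ℝ → ℂ := fun p => fderiv ℝ f p (1, 0) / fderiv ℝ h p (1, 0) with hk
  have bigO : ∀ p, h p = z → (fun q => q - p) =O[nhds p] fun q => h q - z := by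
    intro p hp
    obtain ⟨e, he⟩ := hreg p hp
    have h1 := (hdh p).isLittleO
    rw [← he] at h1
    have h2 := e.isBigO_sub_rev (nhds p) p
    have h3 := (h1.trans_isBigO h2).right_isBigO_add
    refine h2.trans (h3.congr_right fun q => ?_)
    simp [hp]
  have iso : ∀ p, h p = z → ∀ᶠ q in nhdsWithin p {p}ᶜ, h q ≠ z := by
    intro p hp
    have h1 := (bigO p hp).eq_zero_imp
    filter_upwards [h1.filter_mono nhdsWithin_le_nhds, self_mem_nhdsWithin] with q h2 h3 h4
    exact h3 (sub_eq_zero.1 (h2 (by simp [h4])))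
  set ψ : ℝ × ℝ → ℂ := fun p => if h p = z then k p else (f p - c) / (h p - z) with hψ
  set R : Set (ℝ × ℝ) := uIcc 0 (2 * π) ×ˢ uIcc 0 1 with hR
  have hRmem : ∀ p ∈ R, p.2 ∈ Icc (0:ℝ) 1 := by
    rintro p ⟨-, hp⟩
    rwa [uIcc_of_le zero_le_one] at hp
  have hψev : ∀ p, h p ≠ z → ψ =ᶠ[nhds p] fun q => (f q - c) / (h q - z) := by
    intro p hp
    filter_upwards [hhc.continuousAt.eventually_ne hp] with q hq
    simp [hψ, hq]
  have hψc : ContinuousOn ψ R := by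
    intro p hpR
    apply ContinuousAt.continuousWithinAt
    by_cases hp : h p = z
    · have ht := hRmem p hpR
      have hfp : f p = c := hfz p.1 p.2 ht hp
      have hh0 : fderiv ℝ h p (1, 0) ≠ 0 := hderiv p.1 p.2 ht
      have hfk : fderiv ℝ f p = k p • fderiv ℝ h p := by
        have e := hf_holo p.1 p.2 ht
        have e1 : fderiv ℝ f p (1, 0) = k p * fderiv ℝ h p (1, 0) := by
          simp only [hk]; rw [div_mul_cancel₀ _ hh0]
        have e2 : fderiv ℝ f p (0, 1) = k p * fderiv ℝ h p (0, 1) := by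
          simp only [hk]; rw [div_mul_eq_mul_div, eq_div_iff hh0]; exact e
        ext
        · simpa using e1
        · simpa using e2
      have h1 : HasFDerivAt (fun q => f q - k p * h q) (0 : (ℝ × ℝ) →L[ℝ] ℂ) p := by
        have := (hdf p).sub ((hdh p).const_mul (k p))
        rw [hfk, sub_self] at this
        exact this
      have h2 := h1.isLittleO.trans_isBigO (bigO p hp)
      have h3 := h2.tendsto_div_nhds_zero
      rw [continuousAt_iff_punctured_nhds]
      have h4 : ψ p = k p := by simp [hψ, hp]
      rw [h4]
      have h5 : Filter.Tendsto (fun q => k p + (f q - k p * h q - (f p - k p * h p) -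
          (0 : (ℝ × ℝ) →L[ℝ] ℂ) (q - p)) / (h q - z)) (nhdsWithin p {p}ᶜ) (nhds (k p + 0)) :=
        tendsto_const_nhds.add (h3.mono_left nhdsWithin_le_nhds)
      rw [add_zero] at h5
      refine h5.congr' ?_
      filter_upwards [iso p hp] with q hq
      have hq' := sub_ne_zero.2 hq
      simp only [hψ, hq, if_false]
      rw [eq_div_iff hq', add_mul, div_mul_cancel₀ _ hq', hfp, hp]
      simp
      ring
    · refine ContinuousAt.congr ?_ (hψev p hp).symm
      exact ContinuousAt.div (by fun_prop) (by fun_prop) (sub_ne_zero.2 hp)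
  set K : Set (ℝ × ℝ) := {p | p ∈ R ∧ h p = z} with hK
  have hKfin : K.Finite := by
    by_contra hinf
    have hRc : IsCompact R := isCompact_uIcc.prod isCompact_uIcc
    obtain ⟨x, hxR, hx⟩ := Set.Infinite.exists_accPt_of_subset_isCompact hinf hRc (fun p hp => hp.1)
    have hcl : IsClosed {p | h p = z} := isClosed_eq hhc continuous_const
    rw [accPt_iff_frequently] at hx
    have hxz : h x = z := by
      have : x ∈ closure {p | h p = z} := by
        rw [mem_closure_iff_frequently]
        exact hx.mono fun y hy => hy.2.2
      rwa [hcl.closure_eq] at this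
    have h1 := iso x hxz
    rw [eventually_nhdsWithin_iff] at h1
    obtain ⟨y, hy, hy'⟩ := (hx.and_eventually h1).exists
    exact hy' hy.1 hy.2.2
  have hψd : ∀ p, h p ≠ z → ∃ D : (ℝ × ℝ) →L[ℝ] ℂ, HasFDerivAt ψ D p ∧
      ∀ v, D v * (h p - z) + ψ p * fderiv ℝ h p v = fderiv ℝ f p v := by
    intro p hp
    have hdiff : DifferentiableAt ℝ ψ p := by
      refine DifferentiableAt.congr_of_eventuallyEq ?_ (hψev p hp)
      have d1 : DifferentiableAt ℝ (fun q => f q - c) p := (hdf p).differentiableAt.sub_const c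
      have d2 : DifferentiableAt ℝ (fun q => h q - z) p := (hdh p).differentiableAt.sub_const z
      simp only [div_eq_mul_inv]
      exact d1.mul (d2.inv (sub_ne_zero.2 hp))
    refine ⟨fderiv ℝ ψ p, hdiff.hasFDerivAt, fun v => ?_⟩
    have h1 := hdiff.hasFDerivAt.mul ((hdh p).sub_const z)
    have h2 : HasFDerivAt (fun q => f q - c) (fderiv ℝ f p) p := (hdf p).sub_const c
    have h3 : (fun q => f q - c) =ᶠ[nhds p] (ψ * fun q => (h q - z)) := by
      filter_upwards [hψev p hp, hhc.continuousAt.eventually_ne hp] with q hq hq'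
      rw [Pi.mul_apply, hq, div_mul_cancel₀ _ (sub_ne_zero.2 hq')]
    have h4 := h1.unique (h2.congr_of_eventuallyEq h3.symm)
    have := DFunLike.congr_fun h4 v
    simp at this
    rw [← this]; ring
  choose! D hD hDv using hψd
  set S : Set (ℝ × ℝ) := (Ioo (min 0 (2 * π)) (max 0 (2 * π)) ×ˢ Ioo (min 0 1) (max 0 1)) \ K with hS
  have hSR : ∀ p ∈ S, p ∈ R ∧ h p ≠ z := by
    rintro p ⟨⟨h1, h2⟩, h3⟩
    have : p ∈ R := ⟨Ioo_subset_Icc_self h1, Ioo_subset_Icc_self h2⟩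
    exact ⟨this, fun h4 => h3 ⟨this, h4⟩⟩
  have hdir : ∀ p v, HasFDerivAt (fun q => fderiv ℝ h q v)
      ((ContinuousLinearMap.apply ℝ ℂ v) ∘L (fderiv ℝ (fderiv ℝ h) p)) p := fun p v =>
    (ContinuousLinearMap.apply ℝ ℂ v).hasFDerivAt.comp p (hd2d p)
  have main := MeasureTheory.integral2_divergence_prod_of_hasFDerivAt_off_countable
    (fun p => -(ψ p * fderiv ℝ h p (0, 1))) (fun p => ψ p * fderiv ℝ h p (1, 0))
    (fun p => if p ∈ S then -(ψ p • ((ContinuousLinearMap.apply ℝ ℂ ((0, 1) : ℝ × ℝ)) ∘L (fderiv ℝ (fderiv ℝ h) p))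
      + (fderiv ℝ h p (0, 1)) • D p) else 0)
    (fun p => if p ∈ S then (ψ p • ((ContinuousLinearMap.apply ℝ ℂ ((1, 0) : ℝ × ℝ)) ∘L (fderiv ℝ (fderiv ℝ h) p))
      + (fderiv ℝ h p (1, 0)) • D p) else 0)
    0 0 (2 * π) 1 K hKfin.countable
    ((hψc.mul (by fun_prop)).neg) (hψc.mul (by fun_prop))
    (by
      intro p hp
      have hp : p ∈ S := hp
      rw [if_pos hp]
      exact ((hD p (hSR p hp).2).mul (hdir p (0, 1))).neg)
    (by
      intro p hp
      have hp : p ∈ S := hp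
      rw [if_pos hp]
      exact ((hD p (hSR p hp).2).mul (hdir p (1, 0))))
  have hzero : ∀ p : ℝ × ℝ, (if p ∈ S then -(ψ p • ((ContinuousLinearMap.apply ℝ ℂ ((0, 1) : ℝ × ℝ)) ∘L (fderiv ℝ (fderiv ℝ h) p))
      + (fderiv ℝ h p (0, 1)) • D p) else 0) (1, 0) +
      (if p ∈ S then (ψ p • ((ContinuousLinearMap.apply ℝ ℂ ((1, 0) : ℝ × ℝ)) ∘L (fderiv ℝ (fderiv ℝ h) p))
      + (fderiv ℝ h p (1, 0)) • D p) else 0) (0, 1) = 0 := by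
    intro p
    by_cases hp : p ∈ S
    · rw [if_pos hp, if_pos hp]
      obtain ⟨hpR, hpz⟩ := hSR p hp
      have e1 := hDv p hpz (1, 0)
      have e2 := hDv p hpz (0, 1)
      have e3 := hf_holo p.1 p.2 (hRmem p hpR)
      have e4 := hsymm p (1, 0) (0, 1)
      simp only [Prod.mk.eta] at e3
      simp only [neg_apply, add_apply, smul_apply,
        ContinuousLinearMap.comp_apply, ContinuousLinearMap.apply_apply, smul_eq_mul, e4]
      apply mul_right_cancel₀ (sub_ne_zero.2 hpz)
      linear_combination (fderiv ℝ h p (1, 0)) * e2 - (fderiv ℝ h p (0, 1)) * e1 + e3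
    · rw [if_neg hp, if_neg hp]; simp
  simp only [hzero] at main
  have main := main MeasureTheory.integrableOn_zero
  have hperd : ∀ (F : ℝ × ℝ → ℂ), (∀ θ t, F (θ + 2 * π, t) = F (θ, t)) → ∀ t,
      fderiv ℝ F (2 * π, t) = fderiv ℝ F (0, t) := by
    intro F hF t
    have h1 := fderiv_comp_add_right (𝕜 := ℝ) (f := F) (x := (0, t)) ((2 * π, 0) : ℝ × ℝ)
    have h2 : (fun x => F (x + ((2 * π, 0) : ℝ × ℝ))) = F := by
      funext x
      have := hF x.1 x.2
      simpa [Prod.add_def] using this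
    rw [h2] at h1
    rw [h1]; simp
  have hside : ∀ t, ψ (2 * π, t) * fderiv ℝ h (2 * π, t) (0, 1) =
      ψ (0, t) * fderiv ℝ h (0, t) (0, 1) := by
    intro t
    have a1 := hper 0 t
    have a2 := hf_per 0 t
    rw [zero_add] at a1 a2
    simp only [hψ, hk, hperd h hper, hperd f hf_per, a1, a2]
  simp only [hside, intervalIntegral.integral_zero, add_sub_cancel_right] at main
  have h1 : ∀ θ, ψ (θ, 1) = (f (θ, 1) - c) / (h (θ, 1) - z) := fun θ => by simp [hψ, hz1 θ]
  have h0 : ∀ θ, ψ (θ, 0) = (f (θ, 0) - c) / (h (θ, 0) - z) := fun θ => by simp [hψ, hz0 θ]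
  simp only [h1, h0] at main
  exact sub_eq_zero.1 main.symm

lemma aux_sard (h : ℝ × ℝ → ℂ) (hsm : ContDiff ℝ (⊤ : ℕ∞) h) :
    Dense {w : ℂ | ∀ p : ℝ × ℝ, h p = w →
      ∃ e : (ℝ × ℝ) ≃L[ℝ] ℂ, (e : (ℝ × ℝ) →L[ℝ] ℂ) = fderiv ℝ h p} := by
  let L : ℂ ≃L[ℝ] ℝ × ℝ := Complex.equivRealProdCLM
  let H : ℂ → ℂ := fun w => h (L w)
  let H' : ℂ → (ℂ →L[ℝ] ℂ) := fun w => (fderiv ℝ h (L w)) ∘L (L : ℂ →L[ℝ] ℝ × ℝ)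
  have hH : ∀ w, HasFDerivAt H (H' w) w := fun w =>
    ((hsm.differentiable (by simp) (L w)).hasFDerivAt).comp w L.hasFDerivAt
  have h0 : MeasureTheory.volume (H '' {w | (H' w).det = 0}) = 0 :=
    MeasureTheory.addHaar_image_eq_zero_of_det_fderivWithin_eq_zero MeasureTheory.volume
      (fun w _ => (hH w).hasFDerivWithinAt) (fun w hw => hw)
  have hd : Dense (H '' {w | (H' w).det = 0})ᶜ :=
    MeasureTheory.Measure.dense_of_ae (MeasureTheory.compl_mem_ae_iff.2 h0)
  refine hd.mono ?_
  intro w hw p hp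
  have hdet : (H' (L.symm p)).det ≠ 0 := fun h1 => hw ⟨L.symm p, h1, by simp [H, hp]⟩
  refine ⟨L.symm.trans ((H' (L.symm p)).toContinuousLinearEquivOfDetNeZero hdet), ?_⟩
  ext v <;> simp [H']

theorem cauchy_integral_formula_for_XHolomorphic
    (h : ℝ × ℝ → ℂ)
    (hsm : ContDiff ℝ (⊤ : ℕ∞) h)
    (hper : ∀ θ t, h (θ + 2 * π, t) = h (θ, t))
    (hinj : ∀ t ∈ Icc (0:ℝ) 1, InjOn (fun θ => h (θ, t)) (Ico 0 (2 * π)))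
    (hderiv : ∀ θ : ℝ, ∀ t ∈ Icc (0:ℝ) 1, deriv (fun x => h (x, t)) θ ≠ 0)
    (hinward : ∀ θ : ℝ, ∀ t ∈ Icc (0:ℝ) 1,
      (deriv (fun s => h (θ, s)) t / deriv (fun x => h (x, t)) θ).im ≤ 0)
    (A : Set ℂ) (hA : A = h '' (univ ×ˢ Icc (0:ℝ) 1))
    (hfront : frontier A ⊆ (range fun θ => h (θ, 0)) ∪ (range fun θ => h (θ, 1)))
    (X : ℝ × ℝ → ℂ)
    (hX : ∀ θ t, X (θ, t) = -(deriv (fun s => h (θ, s)) t) / deriv (fun x => h (x, t)) θ)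
    (f : ℝ × ℝ → ℂ)
    (hf_per : ∀ θ t, f (θ + 2 * π, t) = f (θ, t))
    (hf_sm : ContDiff ℝ (⊤ : ℕ∞) f)
    (hf_holo : ∀ θ : ℝ, ∀ t ∈ Icc (0:ℝ) 1,
      deriv (fun s => f (θ, s)) t = -X (θ, t) * deriv (fun x => f (x, t)) θ)
    (g : ℂ → ℂ) (hg_cont : ContinuousOn g A)
    (hg_fact : ∀ θ : ℝ, ∀ t ∈ Icc (0:ℝ) 1, f (θ, t) = g (h (θ, t)))
    (hwind_out : ∀ z ∈ interior A,
      (2 * π * I)⁻¹ *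
        ∫ θ in (0:ℝ)..(2 * π), deriv (fun x => h (x, 1)) θ / (h (θ, 1) - z) = 1)
    (hwind_in : ∀ z ∈ interior A,
      (2 * π * I)⁻¹ *
        ∫ θ in (0:ℝ)..(2 * π), deriv (fun x => h (x, 0)) θ / (h (θ, 0) - z) = 0) :
    ∀ z ∈ interior A,
      g z = (2 * π * I)⁻¹ *
        ((∫ θ in (0:ℝ)..(2 * π), f (θ, 1) * deriv (fun x => h (x, 1)) θ / (h (θ, 1) - z)) -
         (∫ θ in (0:ℝ)..(2 * π), f (θ, 0) * deriv (fun x => h (x, 0)) θ / (h (θ, 0) - z))) := by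
  intro z hz
  have hsm1 : Differentiable ℝ h := hsm.differentiable (by simp)
  have hfm1 : Differentiable ℝ f := hf_sm.differentiable (by simp)
  have dθ : ∀ F : ℝ × ℝ → ℂ, Differentiable ℝ F → ∀ θ t,
      deriv (fun x => F (x, t)) θ = fderiv ℝ F (θ, t) (1, 0) := by
    intro F hF θ t
    have h1 : HasDerivAt (fun x : ℝ => ((x, t) : ℝ × ℝ)) (1, 0) θ :=
      (hasDerivAt_id θ).prodMk (hasDerivAt_const θ t)
    exact ((hF (θ, t)).hasFDerivAt.comp_hasDerivAt θ h1).deriv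
  have dt : ∀ F : ℝ × ℝ → ℂ, Differentiable ℝ F → ∀ θ t,
      deriv (fun s => F (θ, s)) t = fderiv ℝ F (θ, t) (0, 1) := by
    intro F hF θ t
    have h1 : HasDerivAt (fun s : ℝ => ((θ, s) : ℝ × ℝ)) (0, 1) t :=
      (hasDerivAt_const t θ).prodMk (hasDerivAt_id t)
    exact ((hF (θ, t)).hasFDerivAt.comp_hasDerivAt t h1).deriv
  have h2pi : (2 * π * I : ℂ) ≠ 0 := by simp [Real.pi_ne_zero]
  have m0 : (0:ℝ) ∈ Icc (0:ℝ) 1 := ⟨le_rfl, zero_le_one⟩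
  have m1 : (1:ℝ) ∈ Icc (0:ℝ) 1 := ⟨zero_le_one, le_rfl⟩
  have off : ∀ t ∈ Icc (0:ℝ) 1, ∀ c : ℂ, (∀ w ∈ interior A, (2 * π * I)⁻¹ *
        ∫ θ in (0:ℝ)..(2 * π), deriv (fun x => h (x, t)) θ / (h (θ, t) - w) = c) →
      ∀ w ∈ interior A, ∀ θ, h (θ, t) ≠ w := by
    intro t ht c hw w hwA θ hθ
    have hs : ContDiff ℝ 1 (fun x => h (x, t)) := by
      have : ContDiff ℝ 1 h := hsm.of_le (by exact_mod_cast le_top)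
      exact this.comp (contDiff_id.prodMk contDiff_const)
    refine aux_jump (fun x => h (x, t)) hs (fun x => hper x t) (hinj t ht) θ (hderiv θ t ht)
      (interior A) (isOpen_interior.mem_nhds (by simpa [hθ] using hwA)) (2 * π * I * c) ?_
    intro v hv
    rw [← hw v hv, mul_inv_cancel_left₀ h2pi]
  have off0 := off 0 m0 0 hwind_in
  have off1 := off 1 m1 1 hwind_out
  have hhc := hsm.continuous
  have hfc := hf_sm.continuous
  have hdc : Continuous (fderiv ℝ h) := hsm.continuous_fderiv (by simp)
  simp only [dθ h hsm1] at hwind_in hwind_out ⊢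
  have cint : ∀ t : ℝ, ∀ p : ℝ → ℂ, Continuous p → ∀ w, (∀ θ, h (θ, t) ≠ w) →
      IntervalIntegrable (fun θ => p θ / (h (θ, t) - w)) MeasureTheory.volume 0 (2 * π) := by
    intro t p hp w hw
    apply Continuous.intervalIntegrable
    exact hp.div (by fun_prop) (fun θ => sub_ne_zero.2 (hw θ))
  -- the formula at regular values
  have hregular : ∀ w ∈ interior A, (∀ p : ℝ × ℝ, h p = w →
      ∃ e : (ℝ × ℝ) ≃L[ℝ] ℂ, (e : (ℝ × ℝ) →L[ℝ] ℂ) = fderiv ℝ h p) →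
      g w = (2 * π * I)⁻¹ *
        ((∫ θ in (0:ℝ)..(2 * π), f (θ, 1) * fderiv ℝ h (θ, 1) (1, 0) / (h (θ, 1) - w)) -
         (∫ θ in (0:ℝ)..(2 * π), f (θ, 0) * fderiv ℝ h (θ, 0) (1, 0) / (h (θ, 0) - w))) := by
    intro w hw hreg
    have key := aux_regular h hsm hper (fun θ t ht => by rw [← dθ h hsm1]; exact hderiv θ t ht)
      f hf_per hf_sm (fun θ t ht => by
        have e := hf_holo θ t ht
        have e0 := hderiv θ t ht
        rw [hX, dt f hfm1, dθ f hfm1, dt h hsm1, dθ h hsm1] at e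
        rw [dθ h hsm1] at e0
        rw [e]
        field_simp) w (g w)
      (fun θ t ht hh => by rw [hg_fact θ t ht, hh]) (off0 w hw) (off1 w hw) hreg
    have split : ∀ t : ℝ, (∀ θ, h (θ, t) ≠ w) →
        ∫ θ in (0:ℝ)..(2 * π), (f (θ, t) - g w) / (h (θ, t) - w) * fderiv ℝ h (θ, t) (1, 0) =
        (∫ θ in (0:ℝ)..(2 * π), f (θ, t) * fderiv ℝ h (θ, t) (1, 0) / (h (θ, t) - w)) -
        g w * ∫ θ in (0:ℝ)..(2 * π), fderiv ℝ h (θ, t) (1, 0) / (h (θ, t) - w) := by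
      intro t ht
      rw [← intervalIntegral.integral_const_mul, ← intervalIntegral.integral_sub
        (cint t _ (by fun_prop) w ht) ((cint t _ (by fun_prop) w ht).const_mul _)]
      congr 1
      funext θ
      ring
    rw [split 1 (off1 w hw), split 0 (off0 w hw)] at key
    have e0 := hwind_in w hw
    have e1 := hwind_out w hw
    linear_combination (2 * π * I : ℂ)⁻¹ * (-key) - g w * e1 + g w * e0
  -- density
  have hnb : (nhdsWithin z {w : ℂ | ∀ p : ℝ × ℝ, h p = w →
      ∃ e : (ℝ × ℝ) ≃L[ℝ] ℂ, (e : (ℝ × ℝ) →L[ℝ] ℂ) = fderiv ℝ h p}).NeBot :=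
    mem_closure_iff_nhdsWithin_neBot.1 (aux_sard h hsm z)
  have cg : ContinuousAt g z := hg_cont.continuousAt (mem_interior_iff_mem_nhds.1 hz)
  have c1 : ContinuousAt (fun w => ∫ θ in (0:ℝ)..(2 * π),
      f (θ, 1) * fderiv ℝ h (θ, 1) (1, 0) / (h (θ, 1) - w)) z :=
    aux_cont_param _ (fun θ => h (θ, 1)) (by fun_prop) (by fun_prop) _ _ _
      (fun θ _ => off1 z hz θ)
  have c0 : ContinuousAt (fun w => ∫ θ in (0:ℝ)..(2 * π),
      f (θ, 0) * fderiv ℝ h (θ, 0) (1, 0) / (h (θ, 0) - w)) z :=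
    aux_cont_param _ (fun θ => h (θ, 0)) (by fun_prop) (by fun_prop) _ _ _
      (fun θ _ => off0 z hz θ)
  have cR := (continuousAt_const (y := ((2 * π * I : ℂ)⁻¹))).mul (c1.sub c0)
  have t1 := cg.tendsto.mono_left (nhdsWithin_le_nhds (s := {w : ℂ | ∀ p : ℝ × ℝ, h p = w →
      ∃ e : (ℝ × ℝ) ≃L[ℝ] ℂ, (e : (ℝ × ℝ) →L[ℝ] ℂ) = fderiv ℝ h p}))
  have t2 := cR.tendsto.mono_left (nhdsWithin_le_nhds (s := {w : ℂ | ∀ p : ℝ × ℝ, h p = w →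
      ∃ e : (ℝ × ℝ) ≃L[ℝ] ℂ, (e : (ℝ × ℝ) →L[ℝ] ℂ) = fderiv ℝ h p}))
  refine tendsto_nhds_unique (t1.congr' ?_) t2
  filter_upwards [self_mem_nhdsWithin, nhdsWithin_le_nhds (isOpen_interior.mem_nhds hz)] with w h1 h2
  exact hregular w h2 h1
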